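/- Let A and B be nonempty compact subsets of the Euclidean plane with hausdorffDist A B = 1, and let α, β ∈ [0,1]. Then hausdorffDist (T_α(A,B)) (T_β(A,B)) ≤ |β − α|. -/

import Mathlib

open Metric Set Pointwise

noncomputable section

/-- The Euclidean plane. -/
abbrev Plane := EuclideanSpace ℝ (Fin 2)

/-- The Voronoi morph: each point of `A` is moved a fraction `α` of the way towards a
nearest point of `B`, and each point of `B` is moved a fraction `1 - α` of the way towards
a nearest point of `A`; all nearest points are used when they are not unique. -/
def voronoiMorph (A B : Set Plane) (α : ℝ) : Set Plane :=
  {p | ∃ a ∈ A, ∃ b ∈ B, dist a b = Metric.infDist a B ∧ p = (1 - α) • a + α • b} ∪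
  {p | ∃ b ∈ B, ∃ a ∈ A, dist b a = Metric.infDist b A ∧ p = (1 - α) • a + α • b}

/-- The dilation morph `S_α(A,B) = (A ⊕ D_α) ∩ (B ⊕ D_{1-α})`. -/
def dilationMorph (A B : Set Plane) (α : ℝ) : Set Plane :=
  (A + Metric.closedBall (0 : Plane) α) ∩ (B + Metric.closedBall (0 : Plane) (1 - α))

/-- The closing of a set by a disk of radius `φ`: dilation followed by erosion. -/
def closing (X : Set Plane) (φ : ℝ) : Set Plane :=
  ((X + Metric.closedBall (0 : Plane) φ)ᶜ + Metric.closedBall (0 : Plane) φ)ᶜ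

/-- The mixed morph `M_{α,φ}(A,B)`. -/
def mixedMorph (A B : Set Plane) (α φ : ℝ) : Set Plane :=
  closing (voronoiMorph A B α) φ ∩ dilationMorph A B α

/-!
As the parameter varies, the points of the morph move along fixed segments, one for each pair of a
point of one set and a nearest point of the other, and no such segment is longer than the Hausdorff
distance of the two sets.
-/

/-- The pairs of points of `A` and `B` that the Voronoi morph joins by a segment: one of the two
points is nearest to the other in its set. The point of `A` always comes first. -/
def nearestPairs {X : Type*} [PseudoMetricSpace X] (A B : Set X) : Set (X × X) :=
  {p ∈ A ×ˢ B | dist p.1 p.2 = infDist p.1 B ∨ dist p.2 p.1 = infDist p.2 A}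

theorem dist_le_hausdorffDist_of_mem_nearestPairs {X : Type*} [PseudoMetricSpace X]
    {A B : Set X} (hAB : hausdorffEDist A B ≠ ⊤) {p : X × X} (hp : p ∈ nearestPairs A B) :
    dist p.1 p.2 ≤ hausdorffDist A B := by
  obtain ⟨⟨hpA, hpB⟩, h | h⟩ := hp
  · exact h ▸ infDist_le_hausdorffDist_of_mem hpA hAB
  · rw [dist_comm, h, hausdorffDist_comm]
    exact infDist_le_hausdorffDist_of_mem hpB (hausdorffEDist_comm.trans_ne hAB)

theorem hausdorffDist_image_image_le {ι X : Type*} [PseudoMetricSpace X] {f g : ι → X}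
    {s : Set ι} {r : ℝ} (hr : 0 ≤ r) (h : ∀ i ∈ s, dist (f i) (g i) ≤ r) :
    hausdorffDist (f '' s) (g '' s) ≤ r :=
  hausdorffDist_le_of_mem_dist hr
    (forall_mem_image.2 fun i hi => ⟨g i, mem_image_of_mem g hi, h i hi⟩)
    (forall_mem_image.2 fun i hi => ⟨f i, mem_image_of_mem f hi, dist_comm (f i) (g i) ▸ h i hi⟩)

theorem hausdorffDist_lineMap_image_nearestPairs_le {𝕜 V P : Type*} [NormedField 𝕜]
    [SeminormedAddCommGroup V] [NormedSpace 𝕜 V] [PseudoMetricSpace P] [NormedAddTorsor V P]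
    {A B : Set P} (hAB : hausdorffEDist A B ≠ ⊤) (α β : 𝕜) :
    hausdorffDist ((fun p : P × P => AffineMap.lineMap p.1 p.2 α) '' nearestPairs A B)
      ((fun p : P × P => AffineMap.lineMap p.1 p.2 β) '' nearestPairs A B) ≤
      dist α β * hausdorffDist A B := by
  refine hausdorffDist_image_image_le (mul_nonneg dist_nonneg hausdorffDist_nonneg) fun p hp => ?_
  rw [dist_lineMap_lineMap]
  gcongr
  exact dist_le_hausdorffDist_of_mem_nearestPairs hAB hp

theorem voronoiMorph_eq_lineMap_image_nearestPairs (A B : Set Plane) (α : ℝ) :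
    voronoiMorph A B α =
      (fun p : Plane × Plane => AffineMap.lineMap p.1 p.2 α) '' nearestPairs A B := by
  ext x
  simp only [voronoiMorph, nearestPairs, AffineMap.lineMap_apply_module, mem_union,
    mem_ofPred_eq, mem_image, mem_prod, Prod.exists]
  grind

theorem voronoiMorph_lipschitz_general {A B : Set Plane} (hAB : hausdorffEDist A B ≠ ⊤)
    (α β : ℝ) :
    hausdorffDist (voronoiMorph A B α) (voronoiMorph A B β) ≤ |β - α| * hausdorffDist A B := by
  rw [voronoiMorph_eq_lineMap_image_nearestPairs, voronoiMorph_eq_lineMap_image_nearestPairs,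
    ← Real.dist_eq, dist_comm β α]
  exact hausdorffDist_lineMap_image_nearestPairs_le hAB α β

theorem voronoiMorph_lipschitz (A B : Set Plane) (hAne : A.Nonempty) (hBne : B.Nonempty)
    (hA : IsCompact A) (hB : IsCompact B) (hAB : Metric.hausdorffDist A B = 1)
    (α β : ℝ) (hα : α ∈ Set.Icc (0 : ℝ) 1) (hβ : β ∈ Set.Icc (0 : ℝ) 1) :
    Metric.hausdorffDist (voronoiMorph A B α) (voronoiMorph A B β) ≤ |β - α| := by
  simpa only [hAB, mul_one] using voronoiMorph_lipschitz_general
    (hausdorffEDist_ne_top_of_nonempty_of_bounded hAne hBne hA.isBounded hB.isBounded) α β
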